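/- Let R be a henselian Gorenstein Noetherian local ring, 𝒳 a resolving subcategory of the category of finitely generated R-modules, and C a finitely generated R-module with C ∈ 𝒞(𝒳). Then there exist finitely generated R-modules X₀ ∈ 𝒳 and X₁ ∈ 𝒳 ∩ 𝒳^⊥ and an exact sequence X₁ → X₀ → C → 0 of R-modules such that for every W ∈ 𝒳 the induced sequence Hom_R(W, X₁) → Hom_R(W, X₀) → Hom_R(W, C) → 0 is exact. -/

import Mathlib

open CategoryTheory IsLocalRing

universe u

noncomputable section

/-- The `i`-th Ext module of two `R`-modules. -/
abbrev ExtMod (R : Type u) [CommRing R] (i : ℕ) (M N : ModuleCat.{u} R) : ModuleCat R :=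
  ((Ext R (ModuleCat.{u} R) i).obj (Opposite.op M)).obj N

/-- Vanishing of the `i`-th Ext module: `Ext_R^i(M, N) = 0`. -/
def ExtVanish (R : Type u) [CommRing R] (i : ℕ) (M N : ModuleCat.{u} R) : Prop :=
  Subsingleton (ExtMod R i M N)

variable (R : Type u) [CommRing R]

/-- `0 → A → B → C → 0` is a short exact sequence. -/
def IsSES {A B C : ModuleCat.{u} R} (f : A →ₗ[R] B) (g : B →ₗ[R] C) : Prop :=
  Function.Injective f ∧ Function.Exact f g ∧ Function.Surjective g

/-- A resolving subcategory of the category of finitely generated `R`-modules. -/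
structure IsResolving (𝒳 : Set (ModuleCat.{u} R)) : Prop where
  finite : ∀ M ∈ 𝒳, Module.Finite R M
  isoClosed : ∀ {M N : ModuleCat.{u} R}, M ∈ 𝒳 → (↥M ≃ₗ[R] ↥N) → N ∈ 𝒳
  freeMem : ∀ M : ModuleCat.{u} R, Module.Finite R M → Module.Free R M → M ∈ 𝒳
  summandClosed : ∀ M N : ModuleCat.{u} R, ModuleCat.of R (↥M × ↥N) ∈ 𝒳 → M ∈ 𝒳
  extClosed : ∀ (A B C : ModuleCat.{u} R) (f : A →ₗ[R] B) (g : B →ₗ[R] C),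
    IsSES R f g → A ∈ 𝒳 → C ∈ 𝒳 → B ∈ 𝒳
  kerClosed : ∀ (A B C : ModuleCat.{u} R) (f : A →ₗ[R] B) (g : B →ₗ[R] C),
    IsSES R f g → B ∈ 𝒳 → C ∈ 𝒳 → A ∈ 𝒳

/-- `f : X → M` is a right `𝒳`-approximation of `M`. -/
def IsRightApprox (𝒳 : Set (ModuleCat.{u} R)) {X M : ModuleCat.{u} R} (f : X →ₗ[R] M) : Prop :=
  X ∈ 𝒳 ∧ ∀ W ∈ 𝒳, ∀ g : ↥W →ₗ[R] ↥M, ∃ h : ↥W →ₗ[R] ↥X, f ∘ₗ h = g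

/-- `M` admits a right `𝒳`-approximation. -/
def HasRightApprox (𝒳 : Set (ModuleCat.{u} R)) (M : ModuleCat.{u} R) : Prop :=
  ∃ (X : ModuleCat.{u} R) (f : X →ₗ[R] M), IsRightApprox R 𝒳 f

/-- `𝒳` is contravariantly infinite: no finitely generated module outside `𝒳` admits
a right `𝒳`-approximation. -/
def ContravariantlyInfinite (𝒳 : Set (ModuleCat.{u} R)) : Prop :=
  ∀ M : ModuleCat.{u} R, Module.Finite R M → M ∉ 𝒳 → ¬ HasRightApprox R 𝒳 M

/-- `𝒳` is contravariantly finite: every finitely generated module admits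
a right `𝒳`-approximation. -/
def ContravariantlyFinite (𝒳 : Set (ModuleCat.{u} R)) : Prop :=
  ∀ M : ModuleCat.{u} R, Module.Finite R M → HasRightApprox R 𝒳 M

/-- The restricted functor `Hom_R(-, C)|_𝒳` is finitely presented, i.e. `C ∈ 𝒞(𝒳)`. -/
def MemCC (𝒳 : Set (ModuleCat.{u} R)) (C : ModuleCat.{u} R) : Prop :=
  ∃ (X₀ X₁ : ModuleCat.{u} R) (g : ↥X₁ →ₗ[R] ↥X₀) (f : ↥X₀ →ₗ[R] ↥C), X₀ ∈ 𝒳 ∧ X₁ ∈ 𝒳 ∧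
    ∀ W ∈ 𝒳, Function.Surjective (fun h : ↥W →ₗ[R] ↥X₀ => f ∘ₗ h) ∧
      Function.Exact (fun h : ↥W →ₗ[R] ↥X₁ => g ∘ₗ h) (fun h : ↥W →ₗ[R] ↥X₀ => f ∘ₗ h)

/-- `𝒳` is coherent: `𝒞(𝒳) = rap 𝒳`. -/
def Coherent (𝒳 : Set (ModuleCat.{u} R)) : Prop :=
  ∀ M : ModuleCat.{u} R, Module.Finite R M → (MemCC R 𝒳 M ↔ HasRightApprox R 𝒳 M)

/-- The right Ext-orthogonal class `𝒳^⊥` of a class `𝒳` of finitely generated modules. -/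
def XPerp (𝒳 : Set (ModuleCat.{u} R)) : Set (ModuleCat.{u} R) :=
  {Y | Module.Finite R Y ∧ ∀ X ∈ 𝒳, ∀ i, 0 < i → ExtVanish R i X Y}

/-- The projective dimension of `M` is at most `n`. -/
def ProjDimLE (M : ModuleCat.{u} R) (n : ℕ) : Prop :=
  ∀ N : ModuleCat.{u} R, ∀ i, n < i → ExtVanish R i M N

/-- The depth of an `R`-module over a local ring: `inf { i | Ext^i(k, M) ≠ 0 }`. -/
def moduleDepth [IsLocalRing R] (M : ModuleCat.{u} R) : ℕ∞ :=
  sInf ((fun i : ℕ => (i : ℕ∞)) ''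
    {i : ℕ | ¬ ExtVanish R i (ModuleCat.of R (ResidueField R)) M})

/-- `M` is a maximal Cohen–Macaulay `R`-module: `depth M ≥ dim R`. -/
def IsMCM [IsLocalRing R] (M : ModuleCat.{u} R) : Prop :=
  ringKrullDim R ≤ (moduleDepth R M : WithBot ℕ∞)

/-- A Gorenstein local ring: `∃ n, Ext^i(M, R) = 0` for every finitely generated `M`
and every `i > n`. -/
def IsGorensteinLocalRing : Prop :=
  ∃ n : ℕ, ∀ M : ModuleCat.{u} R, Module.Finite R M →
    ∀ i, n < i → ExtVanish R i M (ModuleCat.of R R)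

/-- A regular local ring: Noetherian local with `dim R = dim_k 𝔪/𝔪²`. -/
def IsRegularLocal [IsLocalRing R] : Prop :=
  IsNoetherianRing R ∧
    ringKrullDim R = (Module.finrank (ResidueField R) (CotangentSpace R) : ℕ)

/-- Witness that the local ring `R` is a complete intersection: its `𝔪`-adic completion
is `Q/(f₁, …, f_c)` for a regular local ring `Q` and a `Q`-regular sequence `f₁, …, f_c`. -/
structure CompleteIntersectionWitness [IsLocalRing R] : Type (u + 1) where
  Q : Type u
  [commRing : CommRing Q]
  [localRing : IsLocalRing Q]
  regular : IsRegularLocal Q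
  fs : List Q
  regSeq : RingTheory.Sequence.IsRegular Q fs
  equiv : AdicCompletion (maximalIdeal R) R ≃+* Q ⧸ Ideal.span {x : Q | x ∈ fs}

/-- The local ring `R` is a complete intersection. -/
def IsCompleteIntersection [IsLocalRing R] : Prop :=
  Nonempty (CompleteIntersectionWitness R)

end

/-!
Over a henselian local ring, coprime factorizations of monic polynomials lift from the residue
field, so an endomorphism `φ` of a finitely generated module with `f ∘ φ = f` has a Fitting
decomposition whose non-invertible part lies in `ker f`. Splitting off such parts makes an
approximation right minimal. Take a minimal approximation `X₀ → C`, and then a minimal approximation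
`X₁` of its kernel; the latter can be approximated since it is a retract of the kernel of the
approximation given by `C ∈ 𝒞(𝒳)`. By Wakamatsu's lemma `Ext¹(W, -)` vanishes on the kernels of
both approximations for every `W ∈ 𝒳`, hence on the extension `X₁` of one by the other. As `𝒳` is
closed under syzygies, dimension shifting gives `X₁ ∈ 𝒳^⊥`.
-/

section Henselian

open Polynomial

variable {R : Type*} [CommRing R] [HenselianLocalRing R]

theorem exists_algHom_lift_residue_of_isStandardEtale {S : Type*} [CommRing S] [Algebra R S]
    [Algebra.IsStandardEtale R S] (φ : S →ₐ[R] ResidueField R) :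
    ∃ σ : S →ₐ[R] R, (IsScalarTower.toAlgHom R R (ResidueField R)).comp σ = φ := by
  obtain ⟨P⟩ := Algebra.IsStandardEtale.nonempty_standardEtalePresentation (R := R) (S := S)
  have hφ : P.HasMap (φ P.x) := P.hasMap.map φ
  have lift_root : ∀ p : R[X], p.Monic → ∀ b : ResidueField R, aeval b p = 0 →
      aeval b (derivative p) ≠ 0 → ∃ a : R, p.IsRoot a ∧ residue R a = b :=
    ((HenselianLocalRing.TFAE R).out 0 1).mp ‹_›
  obtain ⟨a, ha, haφ⟩ :=
    lift_root P.f P.monic_f (φ P.x) hφ.1 hφ.isUnit_derivative_f.ne_zero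
  have ha_map : P.HasMap a := by
    refine ⟨by rwa [coe_aeval_eq_eval], ?_⟩
    have hg := hφ.2
    rw [← haφ, ← ResidueField.algebraMap_eq, aeval_algebraMap_apply,
      ResidueField.algebraMap_eq] at hg
    exact (isUnit_map_iff (residue R) _).mp hg
  refine ⟨(P.lift a ha_map).comp P.equivRing.toAlgHom, P.hom_ext ?_⟩
  simp [haφ]

theorem exists_algHom_lift_residue_of_etale {S : Type*} [CommRing S] [Algebra R S]
    [Algebra.Etale R S] (φ : S →ₐ[R] ResidueField R) :
    ∃ σ : S →ₐ[R] R, (IsScalarTower.toAlgHom R R (ResidueField R)).comp σ = φ := by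
  have : (RingHom.ker φ).IsPrime := RingHom.ker_isPrime φ
  obtain ⟨s, hs, _⟩ := Algebra.IsEtaleAt.exists_isStandardEtale (R := R) (RingHom.ker φ)
  have hs_unit : IsUnit (φ s) := isUnit_iff_ne_zero.mpr hs
  obtain ⟨τ, hτ⟩ := exists_algHom_lift_residue_of_isStandardEtale
    (IsLocalization.Away.liftAlgHom (S := Localization.Away s) (x := s) (f := φ) hs_unit)
  refine ⟨τ.comp (IsScalarTower.toAlgHom R S _), ?_⟩
  rw [← AlgHom.comp_assoc, hτ]
  ext x
  simp

theorem exists_eq_mul_of_map_residue_eq_mul {p : R[X]} (hp : p.Monic) {a b : (ResidueField R)[X]}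
    (ha : a.Monic) (hb : b.Monic) (hab : IsCoprime a b) (h : p.map (residue R) = a * b) :
    ∃ u v : R[X], p = u * v ∧ IsCoprime u v ∧
      u.map (residue R) = a ∧ v.map (residue R) = b := by
  have hdeg : p.natDegree = a.natDegree + b.natDegree := by
    rw [← ha.natDegree_mul hb, ← h, hp.natDegree_map]
  let p' : MonicDegreeEq R p.natDegree := .mk p hp rfl
  -- The universal ring of coprime factorizations of `p` is étale over `R`, and `p ↦ a * b` is one
  -- of its residue-field-valued points.
  obtain ⟨σ, hσ⟩ := exists_algHom_lift_residue_of_etale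
    ((UniversalCoprimeFactorizationRing.homEquiv (ResidueField R) _ _ hdeg p').symm
      ⟨(.mk a ha rfl, .mk b hb rfl), h.symm, hab⟩)
  have hfst := UniversalCoprimeFactorizationRing.homEquiv_comp_fst _ _ _ hdeg p' σ
    (IsScalarTower.toAlgHom R R (ResidueField R))
  have hsnd := UniversalCoprimeFactorizationRing.homEquiv_comp_snd _ _ _ hdeg p' σ
    (IsScalarTower.toAlgHom R R (ResidueField R))
  rw [hσ, Equiv.apply_symm_apply] at hfst hsnd
  set w := UniversalCoprimeFactorizationRing.homEquiv R _ _ hdeg p' σ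
  refine ⟨w.1.1.1, w.1.2.1, ?_, w.2.2, ?_, ?_⟩
  · simp [w.2.1, p', MonicDegreeEq.mk]
  · simpa using! congrArg Subtype.val hfst.symm
  · simpa using! congrArg Subtype.val hsnd.symm

theorem isUnit_eval_iff_eval_map_residue_ne_zero {S : Type*} [CommRing S] [IsLocalRing S]
    {p : S[X]} {a : S} :
    IsUnit (p.eval a) ↔ (p.map (residue S)).eval (residue S a) ≠ 0 := by
  rw [eval_map_apply, ← isUnit_iff_ne_zero, isUnit_map_iff]

theorem exists_eq_mul_isCoprime_and_map_residue_eq_X_pow {p : R[X]} (hp : p.Monic) :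
    ∃ (u v : R[X]) (m : ℕ), p = u * v ∧ IsCoprime u v ∧ u.map (residue R) = X ^ m ∧
      IsUnit (v.coeff 0) := by
  obtain ⟨q, hpq, hq⟩ := exists_eq_pow_rootMultiplicity_mul_and_not_dvd
    (p.map (residue R)) (hp.map _).ne_zero 0
  set m := rootMultiplicity 0 (p.map (residue R))
  rw [C_0, sub_zero] at hpq hq
  have hq_monic : q.Monic := (monic_X.pow m).of_mul_monic_left (hpq ▸ hp.map _)
  have hcoprime : IsCoprime (X ^ m) q :=
    (irreducible_X.coprime_iff_not_dvd.mpr hq).pow_left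
  obtain ⟨u, v, huv, h, hu, hv⟩ :=
    exists_eq_mul_of_map_residue_eq_mul hp (monic_X.pow m) hq_monic hcoprime hpq
  refine ⟨u, v, m, huv, h, hu, ?_⟩
  rw [coeff_zero_eq_eval_zero, isUnit_eval_iff_eval_map_residue_ne_zero, hv, map_zero,
    ← coeff_zero_eq_eval_zero]
  rwa [X_dvd_iff] at hq

end Henselian

section Fitting

open Polynomial

theorem isUnit_of_aeval_eq_zero {R A : Type*} [CommRing R] [Ring A] [Algebra R A] {p : R[X]} {a : A}
    (h : aeval a p = 0) (hp : IsUnit (p.coeff 0)) : IsUnit a := by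
  have hcoeff : IsUnit (algebraMap R A (p.coeff 0)) := hp.map _
  have hmul : a * aeval a p.divX = -algebraMap R A (p.coeff 0) := by
    rw [← divX_mul_X_add p, map_add, aeval_C, add_eq_zero_iff_eq_neg, mul_comm, map_mul,
      aeval_X] at h
    simpa using h
  have hcomm : Commute a (aeval a p.divX) := by
    simpa using (Polynomial.commute_X p.divX).map (aeval a)
  exact (hcomm.isUnit_mul_iff.mp (hmul ▸ hcoeff.neg)).1

variable {R X M : Type*} [CommRing R] [AddCommGroup X] [Module R X] [AddCommGroup M] [Module R M]

theorem comp_aeval_of_comp_eq_self {f : X →ₗ[R] M} {φ : Module.End R X} (h : f ∘ₗ φ = f)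
    (p : R[X]) : f ∘ₗ aeval φ p = p.eval 1 • f := by
  have hpow : ∀ n : ℕ, f ∘ₗ (φ ^ n) = f := by
    intro n
    induction n with
    | zero => rfl
    | succ n ih => rw [pow_succ, Module.End.mul_eq_comp, ← LinearMap.comp_assoc, ih, h]
  induction p using Polynomial.induction_on' with
  | add p q hp hq => rw [map_add, LinearMap.comp_add, hp, hq, eval_add, add_smul]
  | monomial n c =>
    rw [← C_mul_X_pow_eq_monomial, map_mul, aeval_C, map_pow, aeval_X, ← Algebra.smul_def,
      LinearMap.comp_smul, hpow, eval_C_mul, eval_pow, eval_X, one_pow, mul_one]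

/-- A linear map `f` is right minimal if every endomorphism `φ` of its domain with `f ∘ φ = f` is an
automorphism; for approximations this makes the domain as small as possible. -/
def IsRightMinimal (f : X →ₗ[R] M) : Prop :=
  ∀ φ : X →ₗ[R] X, f ∘ₗ φ = f → Function.Bijective φ

-- `A` is the part of `X` where `φ` is nilpotent modulo the maximal ideal: the factor `u` of an
-- annihilating polynomial with only the residual root `0` has `u(1)` invertible, and
-- `f ∘ u(φ) = u(1) • f`.
theorem exists_isCompl_le_ker_and_bijective_of_comp_eq_self [HenselianLocalRing R]
    [Module.Finite R X]
    {f : X →ₗ[R] M} {φ : Module.End R X} (h : f ∘ₗ φ = f) :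
    ∃ A B : Submodule R X, IsCompl A B ∧ A ≤ LinearMap.ker f ∧
      (A = ⊥ → Function.Bijective φ) := by
  obtain ⟨p, hp, hpφ⟩ := LinearMap.exists_monic_and_aeval_eq_zero R φ
  obtain ⟨u, v, m, rfl, hcoprime, hu, hv⟩ :=
    exists_eq_mul_isCoprime_and_map_residue_eq_X_pow hp
  have hsup : LinearMap.ker (aeval φ u) ⊔ LinearMap.ker (aeval φ v) = ⊤ := by
    rw [sup_ker_aeval_eq_ker_aeval_mul_of_coprime φ hcoprime, hpφ, LinearMap.ker_zero]
  refine ⟨LinearMap.ker (aeval φ u), LinearMap.ker (aeval φ v),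
    ⟨disjoint_ker_aeval_of_isCoprime φ hcoprime, codisjoint_iff.mpr hsup⟩, ?_, fun hbot => ?_⟩
  · have hu_unit : IsUnit (u.eval 1) := by
      simp [isUnit_eval_iff_eval_map_residue_ne_zero, hu]
    calc LinearMap.ker (aeval φ u) ≤ LinearMap.ker (f ∘ₗ aeval φ u) := LinearMap.ker_le_ker_comp _ _
      _ = LinearMap.ker (u.eval 1 • f) := by rw [comp_aeval_of_comp_eq_self h]
      _ = LinearMap.ker f := by
        ext x
        simp [hu_unit.smul_eq_zero]
  · have hvφ : aeval φ v = 0 := LinearMap.ker_eq_top.mp (by rwa [hbot, bot_sup_eq] at hsup)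
    exact (Module.End.isUnit_iff φ).mp (isUnit_of_aeval_eq_zero hvφ hv)

theorem isCompl_sup_map_subtype {N X' : Submodule R X} (h : IsCompl N X') {A B : Submodule R X'}
    (hAB : IsCompl A B) : IsCompl (N ⊔ A.map X'.subtype) (B.map X'.subtype) := by
  have hdisj : Disjoint (A.map X'.subtype) (B.map X'.subtype) :=
    Submodule.disjoint_map X'.injective_subtype hAB.disjoint
  have hsup : A.map X'.subtype ⊔ B.map X'.subtype = X' := by
    rw [← Submodule.map_sup, hAB.sup_eq_top, Submodule.map_subtype_top]
  exact ⟨hdisj.disjoint_sup_left_of_disjoint_sup_right (hsup.symm ▸ h.disjoint),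
    codisjoint_iff.mpr (by rw [sup_assoc, hsup, h.sup_eq_top])⟩

theorem exists_isCompl_le_ker_and_isRightMinimal [HenselianLocalRing R] [IsNoetherian R X]
    (f : X →ₗ[R] M) :
    ∃ N X' : Submodule R X, IsCompl N X' ∧ N ≤ LinearMap.ker f ∧
      IsRightMinimal (f ∘ₗ X'.subtype) := by
  obtain ⟨N, ⟨hN, X', hc⟩, hmax⟩ := set_has_maximal_iff_noetherian.mpr ‹IsNoetherian R X›
    {N : Submodule R X | N ≤ LinearMap.ker f ∧ ∃ X', IsCompl N X'}
    ⟨⊥, bot_le, ⊤, isCompl_bot_top⟩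
  refine ⟨N, X', hc, hN, fun φ hφ => ?_⟩
  obtain ⟨A, B, hAB, hA, hbij⟩ := exists_isCompl_le_ker_and_bijective_of_comp_eq_self hφ
  have hA_ker : A.map X'.subtype ≤ LinearMap.ker f := by
    rwa [Submodule.map_le_iff_le_comap, ← LinearMap.ker_comp]
  have hA_le : A.map X'.subtype ≤ N := by
    by_contra hle
    exact hmax _ ⟨sup_le hN hA_ker, _, isCompl_sup_map_subtype hc hAB⟩ (left_lt_sup.mpr hle)
  have hA_bot : A.map X'.subtype = ⊥ :=
    le_bot_iff.mp (hc.disjoint hA_le (Submodule.map_subtype_le _ _))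
  exact hbij <| Submodule.map_injective_of_injective X'.injective_subtype <|
    hA_bot.trans (Submodule.map_bot _).symm

theorem exists_retract_isRightMinimal [HenselianLocalRing R] [IsNoetherian R X]
    (f : X →ₗ[R] M) :
    ∃ (X' : Submodule R X) (p : X →ₗ[R] X'), p ∘ₗ X'.subtype = LinearMap.id ∧
      (f ∘ₗ X'.subtype) ∘ₗ p = f ∧ IsRightMinimal (f ∘ₗ X'.subtype) := by
  obtain ⟨N, X', hc, hN, hmin⟩ := exists_isCompl_le_ker_and_isRightMinimal f
  let p := X'.projectionOnto N hc.symm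
  have hp : p ∘ₗ X'.subtype = LinearMap.id :=
    LinearMap.ext fun x => Submodule.projectionOnto_apply_left hc.symm x
  refine ⟨X', p, hp, LinearMap.ext fun x => ?_, hmin⟩
  have hker : x - p x ∈ N := by
    rw [← Submodule.projectionOnto_apply_eq_zero_iff hc.symm, map_sub, sub_eq_zero]
    exact (LinearMap.congr_fun hp (p x)).symm
  exact (LinearMap.sub_mem_ker_iff.mp (hN hker)).symm

end Fitting

section Wakamatsu

open Limits Abelian

universe w v u'

variable {𝒞 : Type u'} [Category.{v} 𝒞] [Abelian 𝒞]

theorem shortExact_of_isPushout {S : ShortComplex 𝒞} (hS : S.ShortExact) {Y E : 𝒞}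
    {a : S.X₁ ⟶ Y} {j : S.X₂ ⟶ E} {i : Y ⟶ E} (sq : IsPushout S.f a j i) {q : E ⟶ S.X₃}
    (hj : j ≫ q = S.g) (hi : i ≫ q = 0) : (ShortComplex.mk i q hi).ShortExact := by
  have := hS.mono_f
  have := hS.epi_g
  have hepi : Epi q := epi_of_epi_fac hj
  have hdesc : ∀ {Z : 𝒞} (k : E ⟶ Z), i ≫ k = 0 → S.f ≫ j ≫ k = 0 := fun k hk => by
    rw [sq.w_assoc, hk, comp_zero]
  exact {
    exact := ShortComplex.exact_of_g_is_cokernel _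
      (CokernelCofork.IsColimit.ofπ' q hi fun k hk =>
        ⟨hS.exact.desc (j ≫ k) (hdesc k hk), sq.hom_ext
          (by rw [← Category.assoc, hj, hS.exact.g_desc])
          (by rw [← Category.assoc, hi, zero_comp, hk])⟩)
    mono_f := MorphismProperty.of_isPushout (P := .monomorphisms 𝒞) sq.flip hS.mono_f
    epi_g := hepi }

variable [HasExt.{w} 𝒞]

theorem extClass_comp_mk₀_of_isPushout {S : ShortComplex 𝒞} (hS : S.ShortExact) {Y E : 𝒞}
    {a : S.X₁ ⟶ Y} {j : S.X₂ ⟶ E} {i : Y ⟶ E} (sq : IsPushout S.f a j i) {q : E ⟶ S.X₃}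
    (hj : j ≫ q = S.g) (hi : i ≫ q = 0) :
    (shortExact_of_isPushout hS sq hj hi).extClass =
      hS.extClass.comp (Ext.mk₀ a) (add_zero 1) := by
  let toPushout : S ⟶ ShortComplex.mk i q hi :=
    { τ₁ := a
      τ₂ := j
      τ₃ := 𝟙 _
      comm₁₂ := sq.w.symm
      comm₂₃ := by simpa }
  have h := hS.extClass_naturality (shortExact_of_isPushout hS sq hj hi) toPushout
  exact (h.trans (Ext.mk₀_id_comp _)).symm

theorem exists_extClass_eq [EnoughProjectives 𝒞] {X Z : 𝒞} (e : Ext Z X 1) :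
    ∃ (E : 𝒞) (i : X ⟶ E) (q : E ⟶ Z) (hi : i ≫ q = 0)
      (hE : (ShortComplex.mk i q hi).ShortExact), hE.extClass = e := by
  let S := ShortComplex.mk (kernel.ι (Projective.π Z)) (Projective.π Z) (kernel.condition _)
  have hS : S.ShortExact :=
    { exact := ShortComplex.exact_kernel _
      mono_f := inferInstanceAs (Mono (kernel.ι (Projective.π Z)))
      epi_g := inferInstanceAs (Epi (Projective.π Z)) }
  have : Projective S.X₂ := inferInstanceAs (Projective (Projective.over Z))
  obtain ⟨y, hy⟩ :=
    Ext.contravariant_sequence_exact₃ hS X e (Ext.eq_zero_of_projective _) (add_zero 1)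
  obtain ⟨a, rfl⟩ := (Ext.mk₀_bijective _ _).2 y
  let q : pushout S.f a ⟶ Z := pushout.desc S.g 0 (by rw [S.zero, comp_zero])
  have sq := IsPushout.of_hasPushout S.f a
  have hj : pushout.inl S.f a ≫ q = S.g := pushout.inl_desc _ _ _
  have hi : pushout.inr S.f a ≫ q = 0 := pushout.inr_desc _ _ _
  exact ⟨pushout S.f a, pushout.inr S.f a, q, hi, shortExact_of_isPushout hS sq hj hi,
    (extClass_comp_mk₀_of_isPushout hS sq hj hi).trans hy⟩

theorem extClass_eq_zero_of_isIso_comp {S : ShortComplex 𝒞} (hS : S.ShortExact)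
    {r : S.X₂ ⟶ S.X₁} (hr : IsIso (S.f ≫ r)) : hS.extClass = 0 := by
  have h : hS.extClass.comp (Ext.mk₀ (S.f ≫ r ≫ inv (S.f ≫ r))) (add_zero 1) = 0 := by
    rw [← Ext.mk₀_comp_mk₀]
    exact hS.extClass_comp_assoc _
  rwa [← Category.assoc, IsIso.hom_inv_id, Ext.comp_mk₀_id] at h

theorem exists_comp_eq_of_extClass_comp_mk₀_eq_zero {S : ShortComplex 𝒞} (hS : S.ShortExact)
    {Y : 𝒞} {k : S.X₁ ⟶ Y} (hk : hS.extClass.comp (Ext.mk₀ k) (add_zero 1) = 0) :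
    ∃ t : S.X₂ ⟶ Y, S.f ≫ t = k := by
  obtain ⟨t', ht⟩ := Ext.contravariant_sequence_exact₁ hS Y (Ext.mk₀ k) (add_zero 1) hk
  obtain ⟨t, rfl⟩ := (Ext.mk₀_bijective _ _).2 t'
  exact ⟨t, (Ext.mk₀_bijective _ _).1 ((Ext.mk₀_comp_mk₀ _ _).symm.trans ht)⟩

theorem extClass_eq_zero_of_comp_mk₀_eq_zero {S : ShortComplex 𝒞} (hS : S.ShortExact)
    {M : 𝒞} {g : S.X₁ ⟶ M} (hlift : ∀ t : S.X₂ ⟶ M, ∃ h : S.X₂ ⟶ S.X₁, h ≫ g = t)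
    (hmin : ∀ φ : S.X₁ ⟶ S.X₁, φ ≫ g = g → IsIso φ)
    (h : hS.extClass.comp (Ext.mk₀ g) (add_zero 1) = 0) : hS.extClass = 0 := by
  obtain ⟨t, ht⟩ := exists_comp_eq_of_extClass_comp_mk₀_eq_zero hS h
  obtain ⟨r, hr⟩ := hlift t
  exact extClass_eq_zero_of_isIso_comp hS (hmin (S.f ≫ r) (by rw [Category.assoc, hr, ht]))

/-- Wakamatsu's lemma. The pushforward to `S.X₂` of an extension of `W` by `S.X₁` has its middle
term in `P`, so lifting along `S.g` retracts it onto `S.X₂` up to an endomorphism over `S.X₃`. -/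
theorem subsingleton_ext_one_of_approx_of_minimal [EnoughProjectives 𝒞]
    {P : ObjectProperty 𝒞} [P.IsClosedUnderExtensions] {S : ShortComplex 𝒞} (hS : S.ShortExact)
    (hX₂ : P S.X₂) (happrox : ∀ {W : 𝒞}, P W → ∀ k : W ⟶ S.X₃, ∃ h : W ⟶ S.X₂, h ≫ S.g = k)
    (hmin : ∀ φ : S.X₂ ⟶ S.X₂, φ ≫ S.g = S.g → IsIso φ) {W : 𝒞} (hW : P W) :
    Subsingleton (Ext W S.X₁ 1) := by
  refine subsingleton_of_forall_eq 0 fun e => ?_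
  have hef : e.comp (Ext.mk₀ S.f) (add_zero 1) = 0 := by
    obtain ⟨E, i, q, hi, hE, he⟩ := exists_extClass_eq (e.comp (Ext.mk₀ S.f) (add_zero 1))
    have hPE : P E := P.prop_X₂_of_shortExact hE hX₂ hW
    rw [← he]
    refine extClass_eq_zero_of_comp_mk₀_eq_zero hE (g := S.g) (happrox hPE) hmin ?_
    rw [he, Ext.comp_assoc_of_third_deg_zero, Ext.mk₀_comp_mk₀, S.zero, Ext.mk₀_zero,
      Ext.comp_zero]
  obtain ⟨k', rfl⟩ := Ext.covariant_sequence_exact₁ _ hS e hef (zero_add 1)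
  obtain ⟨k, rfl⟩ := (Ext.mk₀_bijective _ _).2 k'
  obtain ⟨h, rfl⟩ := happrox hW k
  rw [← Ext.mk₀_comp_mk₀, Ext.comp_assoc_of_second_deg_zero, hS.comp_extClass, Ext.comp_zero]

theorem subsingleton_ext_X₂ {S : ShortComplex 𝒞} (hS : S.ShortExact) {W : 𝒞} {n : ℕ}
    (h₁ : Subsingleton (Ext W S.X₁ n)) (h₃ : Subsingleton (Ext W S.X₃ n)) :
    Subsingleton (Ext W S.X₂ n) := by
  refine subsingleton_of_forall_eq 0 fun e => ?_
  obtain ⟨e₁, rfl⟩ := Ext.covariant_sequence_exact₂ W hS e (Subsingleton.elim _ _)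
  rw [Subsingleton.elim e₁ 0, Ext.zero_comp]

end Wakamatsu

section Resolving

open Abelian

variable {R : Type u} [CommRing R] {𝒳 : Set (ModuleCat.{u} R)}

theorem extVanish_succ_of_subsingleton_ext {X Y : ModuleCat.{u} R} {n : ℕ}
    (h : Subsingleton (Abelian.Ext X Y (n + 1))) : ExtVanish R (n + 1) X Y := by
  let P := projectiveResolution X
  refine ModuleCat.subsingleton_of_isZero (Limits.IsZero.of_iso ?_ (P.isoExt (n + 1) Y))
  rw [← HomologicalComplex.exactAt_iff_isZero_homology,
    HomologicalComplex.exactAt_iff' _ n (n + 1) (n + 2) (by simp) (by simp),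
    ShortComplex.moduleCat_exact_iff]
  intro (x : P.complex.X (n + 1) ⟶ Y) (hx : P.complex.d (n + 2) (n + 1) ≫ x = 0)
  exact (P.extMk_eq_zero_iff x (n + 2) rfl hx n rfl).mp (Subsingleton.elim _ _)

namespace IsResolving

theorem isClosedUnderExtensions (h𝒳 : IsResolving R 𝒳) :
    ObjectProperty.IsClosedUnderExtensions fun M : ModuleCat.{u} R => M ∈ 𝒳 where
  prop_X₂_of_shortExact {S} hS h₁ h₃ :=
    h𝒳.extClosed S.X₁ S.X₂ S.X₃ S.f.hom S.g.hom
      ⟨hS.moduleCat_injective_f,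
        (ShortComplex.ShortExact.moduleCat_exact_iff_function_exact _).mp hS.exact,
        hS.moduleCat_surjective_g⟩ h₁ h₃

theorem mem_of_retract (h𝒳 : IsResolving R 𝒳) {M N : ModuleCat.{u} R} (hM : M ∈ 𝒳)
    {s : N →ₗ[R] M} {r : M →ₗ[R] N} (hrs : r ∘ₗ s = LinearMap.id) : N ∈ 𝒳 := by
  let e : M ≃ₗ[R] LinearMap.ker r × N :=
    ((LinearMap.exact_subtype_ker_map r).splitSurjectiveEquiv (Submodule.injective_subtype _)
      ⟨s, hrs⟩).1
  exact h𝒳.summandClosed N (ModuleCat.of R (LinearMap.ker r))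
    (h𝒳.isoClosed hM (e.trans (LinearEquiv.prodComm R _ _)))

theorem exists_shortExact_projective (h𝒳 : IsResolving R 𝒳) {X : ModuleCat.{u} R} (hX : X ∈ 𝒳) :
    ∃ (K P : ModuleCat.{u} R) (i : K ⟶ P) (q : P ⟶ X) (w : i ≫ q = 0),
      (ShortComplex.mk i q w).ShortExact ∧ Projective P ∧ K ∈ 𝒳 := by
  have := h𝒳.finite X hX
  obtain ⟨P, _, _, _, _, π, hπ⟩ := Module.exists_finite_presentation R X
  refine ⟨_, _, _, _, _, LinearMap.shortExact_shortComplexKer hπ,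
    inferInstanceAs (Projective (ModuleCat.of R P)), ?_⟩
  exact h𝒳.kerClosed _ (ModuleCat.of R P) X (LinearMap.ker π).subtype π
    ⟨Submodule.injective_subtype _, LinearMap.exact_subtype_ker_map π, hπ⟩
    (h𝒳.freeMem _ ‹_› ‹_›) hX

theorem subsingleton_ext_succ (h𝒳 : IsResolving R 𝒳) {Y : ModuleCat.{u} R}
    (hY : ∀ W ∈ 𝒳, Subsingleton (Ext W Y 1)) (n : ℕ) {W : ModuleCat.{u} R} (hW : W ∈ 𝒳) :
    Subsingleton (Ext W Y (n + 1)) := by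
  induction n generalizing W with
  | zero => exact hY W hW
  | succ n ih =>
    obtain ⟨K, P, i, q, w, hS, _, hK⟩ := h𝒳.exists_shortExact_projective hW
    have := ih hK
    exact (precomp_extClass_surjective_of_projective_X₂ Y hS (n + 1)).subsingleton

theorem mem_xPerp (h𝒳 : IsResolving R 𝒳) {Y : ModuleCat.{u} R} (hfin : Module.Finite R Y)
    (hY : ∀ W ∈ 𝒳, Subsingleton (Ext W Y 1)) : Y ∈ XPerp R 𝒳 := by
  refine ⟨hfin, fun W hW i hi => ?_⟩
  obtain ⟨n, rfl⟩ := Nat.exists_eq_succ_of_ne_zero hi.ne'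
  exact extVanish_succ_of_subsingleton_ext (h𝒳.subsingleton_ext_succ hY n hW)

end IsResolving

namespace IsRightApprox

variable {X M : ModuleCat.{u} R} {f : X →ₗ[R] M}

theorem surjective (h𝒳 : IsResolving R 𝒳) (hf : IsRightApprox R 𝒳 f) : Function.Surjective f := by
  intro m
  obtain ⟨h, hh⟩ := hf.2 (ModuleCat.of R R) (h𝒳.freeMem _ inferInstance inferInstance)
    (LinearMap.toSpanSingleton R M m)
  exact ⟨h (1 : R), by simpa using! LinearMap.congr_fun hh (1 : R)⟩

theorem of_retract (hf : IsRightApprox R 𝒳 f) {N : ModuleCat.{u} R} {s : N →ₗ[R] M}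
    {r : M →ₗ[R] N} (hrs : r ∘ₗ s = LinearMap.id) : IsRightApprox R 𝒳 (r ∘ₗ f) := by
  refine ⟨hf.1, fun W hW g => ?_⟩
  obtain ⟨h, hh⟩ := hf.2 W hW (s ∘ₗ g)
  exact ⟨h, by rw [LinearMap.comp_assoc, hh, ← LinearMap.comp_assoc, hrs, LinearMap.id_comp]⟩

theorem exists_isRightMinimal [IsNoetherianRing R] [HenselianLocalRing R] (h𝒳 : IsResolving R 𝒳)
    (hf : IsRightApprox R 𝒳 f) :
    ∃ (X' : ModuleCat.{u} R) (f' : X' →ₗ[R] M) (s : X' →ₗ[R] X) (r : X →ₗ[R] X'),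
      IsRightApprox R 𝒳 f' ∧ IsRightMinimal f' ∧ r ∘ₗ s = LinearMap.id ∧ f ∘ₗ s = f' ∧
        f' ∘ₗ r = f := by
  have := h𝒳.finite X hf.1
  obtain ⟨X', p, hp, hfp, hmin⟩ := exists_retract_isRightMinimal f
  refine ⟨ModuleCat.of R X', f ∘ₗ X'.subtype, X'.subtype, p,
    ⟨h𝒳.mem_of_retract (N := ModuleCat.of R X') hf.1 hp, fun W hW g => ?_⟩, hmin, hp, rfl, hfp⟩
  obtain ⟨h, rfl⟩ := hf.2 W hW g
  exact ⟨p ∘ₗ h, by rw [← LinearMap.comp_assoc]; exact congrArg (· ∘ₗ h) hfp⟩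

theorem subsingleton_ext_one_ker (h𝒳 : IsResolving R 𝒳) (hf : IsRightApprox R 𝒳 f)
    (hmin : IsRightMinimal f) {W : ModuleCat.{u} R} (hW : W ∈ 𝒳) :
    Subsingleton (Ext W (ModuleCat.of R (LinearMap.ker f)) 1) := by
  have := h𝒳.isClosedUnderExtensions
  refine subsingleton_ext_one_of_approx_of_minimal (P := fun M : ModuleCat.{u} R => M ∈ 𝒳)
    (LinearMap.shortExact_shortComplexKer (hf.surjective h𝒳)) hf.1
    (fun {V} hV k => ?_) (fun φ hφ => ?_) hW
  · obtain ⟨h, hh⟩ := hf.2 V hV k.hom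
    exact ⟨ModuleCat.ofHom h, ModuleCat.hom_ext hh⟩
  · rw [ConcreteCategory.isIso_iff_bijective]
    exact hmin φ.hom (congrArg ModuleCat.Hom.hom hφ)

theorem mem_xPerp (h𝒳 : IsResolving R 𝒳) (hf : IsRightApprox R 𝒳 f)
    (hmin : IsRightMinimal f) (hM : ∀ W ∈ 𝒳, Subsingleton (Ext W M 1)) : X ∈ XPerp R 𝒳 :=
  h𝒳.mem_xPerp (h𝒳.finite X hf.1) fun W hW =>
    subsingleton_ext_X₂ (LinearMap.shortExact_shortComplexKer (hf.surjective h𝒳))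
      (hf.subsingleton_ext_one_ker h𝒳 hmin hW) (hM W hW)

theorem exact_comp {X₁ : ModuleCat.{u} R} {g : X₁ →ₗ[R] LinearMap.ker f}
    (hg : IsRightApprox R 𝒳 (M := ModuleCat.of R (LinearMap.ker f)) g) {W : ModuleCat.{u} R}
    (hW : W ∈ 𝒳) :
    Function.Exact (fun h : W →ₗ[R] X₁ => ((LinearMap.ker f).subtype ∘ₗ g) ∘ₗ h)
      (fun h : W →ₗ[R] X => f ∘ₗ h) := by
  intro k
  constructor
  · intro hk
    obtain ⟨h, hh⟩ := hg.2 W hW (k.codRestrict (LinearMap.ker f) (LinearMap.congr_fun hk))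
    exact ⟨h, LinearMap.ext fun w => congrArg Subtype.val (LinearMap.congr_fun hh w)⟩
  · rintro ⟨h, rfl⟩
    exact LinearMap.ext fun w => (g (h w)).2

end IsRightApprox

namespace HasRightApprox

theorem ker_of_retract {X X' M : ModuleCat.{u} R} {f : X →ₗ[R] M} {f' : X' →ₗ[R] M}
    {s : X' →ₗ[R] X} {r : X →ₗ[R] X'} (hrs : r ∘ₗ s = LinearMap.id) (hs : f ∘ₗ s = f')
    (hr : f' ∘ₗ r = f) (h : HasRightApprox R 𝒳 (ModuleCat.of R (LinearMap.ker f))) :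
    HasRightApprox R 𝒳 (ModuleCat.of R (LinearMap.ker f')) := by
  have hs_ker : ∀ x ∈ LinearMap.ker f', s x ∈ LinearMap.ker f := fun x hx =>
    (LinearMap.congr_fun hs x).trans hx
  have hr_ker : ∀ x ∈ LinearMap.ker f, r x ∈ LinearMap.ker f' := fun x hx =>
    (LinearMap.congr_fun hr x).trans hx
  obtain ⟨Z, k, hk⟩ := h
  exact ⟨Z, _, hk.of_retract (N := ModuleCat.of R (LinearMap.ker f')) (s := s.restrict hs_ker)
    (r := r.restrict hr_ker) (LinearMap.ext fun x => Subtype.ext (LinearMap.congr_fun hrs x))⟩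

theorem exists_isRightMinimal [IsNoetherianRing R] [HenselianLocalRing R] (h𝒳 : IsResolving R 𝒳)
    {M : ModuleCat.{u} R} (h : HasRightApprox R 𝒳 M) :
    ∃ (X : ModuleCat.{u} R) (f : X →ₗ[R] M), IsRightApprox R 𝒳 f ∧ IsRightMinimal f := by
  obtain ⟨X, f, hf⟩ := h
  obtain ⟨X', f', _, _, hf', hmin, _⟩ := hf.exists_isRightMinimal h𝒳
  exact ⟨X', f', hf', hmin⟩

end HasRightApprox

namespace MemCC

variable {C : ModuleCat.{u} R}

theorem exists_isRightApprox (hC : MemCC R 𝒳 C) :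
    ∃ (X : ModuleCat.{u} R) (f : X →ₗ[R] C),
      IsRightApprox R 𝒳 f ∧ HasRightApprox R 𝒳 (ModuleCat.of R (LinearMap.ker f)) := by
  obtain ⟨X₀, X₁, g, f, hX₀, hX₁, hexact⟩ := hC
  have hfg : f ∘ₗ g = 0 := ((hexact X₁ hX₁).2 g).mpr ⟨LinearMap.id, rfl⟩
  refine ⟨X₀, f, ⟨hX₀, fun W hW => (hexact W hW).1⟩, X₁,
    g.codRestrict (LinearMap.ker f) (LinearMap.congr_fun hfg), hX₁, fun W hW k => ?_⟩
  have hk : f ∘ₗ (LinearMap.ker f).subtype ∘ₗ k = 0 := LinearMap.ext fun w => (k w).2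
  obtain ⟨h, hh⟩ := ((hexact W hW).2 _).mp hk
  exact ⟨h, LinearMap.ext fun w => Subtype.ext (LinearMap.congr_fun hh w)⟩

theorem exists_isRightMinimal [IsNoetherianRing R] [HenselianLocalRing R] (h𝒳 : IsResolving R 𝒳)
    (hC : MemCC R 𝒳 C) :
    ∃ (X : ModuleCat.{u} R) (f : X →ₗ[R] C), IsRightApprox R 𝒳 f ∧ IsRightMinimal f ∧
      HasRightApprox R 𝒳 (ModuleCat.of R (LinearMap.ker f)) := by
  obtain ⟨X, f, hf, hker⟩ := hC.exists_isRightApprox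
  obtain ⟨X', f', s, r, hf', hmin, hrs, hs, hr⟩ := hf.exists_isRightMinimal h𝒳
  exact ⟨X', f', hf', hmin, hker.ker_of_retract hrs hs hr⟩

end MemCC

end Resolving

theorem stmt9_general (R : Type u) [CommRing R] [IsNoetherianRing R] [HenselianLocalRing R]
    (𝒳 : Set (ModuleCat.{u} R)) (h𝒳 : IsResolving R 𝒳)
    (C : ModuleCat.{u} R) (hC : MemCC R 𝒳 C) :
    ∃ (X₀ X₁ : ModuleCat.{u} R) (g : ↥X₁ →ₗ[R] ↥X₀) (f : ↥X₀ →ₗ[R] ↥C),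
      X₀ ∈ 𝒳 ∧ X₁ ∈ 𝒳 ∧ X₁ ∈ XPerp R 𝒳 ∧
      Function.Exact g f ∧ Function.Surjective f ∧
      ∀ W ∈ 𝒳, Function.Surjective (fun h : ↥W →ₗ[R] ↥X₀ => f ∘ₗ h) ∧
        Function.Exact (fun h : ↥W →ₗ[R] ↥X₁ => g ∘ₗ h)
          (fun h : ↥W →ₗ[R] ↥X₀ => f ∘ₗ h) := by
  obtain ⟨X₀, f, hf, hf_min, hker⟩ := hC.exists_isRightMinimal h𝒳
  obtain ⟨X₁, g, hg, hg_min⟩ := hker.exists_isRightMinimal h𝒳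
  have hperp : X₁ ∈ XPerp R 𝒳 :=
    hg.mem_xPerp h𝒳 hg_min fun W hW => hf.subsingleton_ext_one_ker h𝒳 hf_min hW
  have hexact : Function.Exact ((LinearMap.ker f).subtype ∘ₗ g) f :=
    (hg.surjective h𝒳).comp_exact_iff_exact.mpr (LinearMap.exact_subtype_ker_map f)
  exact ⟨X₀, X₁, (LinearMap.ker f).subtype ∘ₗ g, f, hf.1, hg.1, hperp, hexact, hf.surjective h𝒳,
    fun W hW => ⟨hf.2 W hW, hg.exact_comp hW⟩⟩

/-- Over a henselian Gorenstein local ring, every `C ∈ 𝒞(𝒳)` admits an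
exact sequence `X₁ → X₀ → C → 0` with `X₀ ∈ 𝒳`, `X₁ ∈ 𝒳 ∩ 𝒳^⊥`, which stays exact after
applying `Hom_R(W, -)` for every `W ∈ 𝒳`. -/
theorem stmt9 (R : Type u) [CommRing R] [IsNoetherianRing R] [IsLocalRing R]
    [HenselianLocalRing R] (hG : IsGorensteinLocalRing R)
    (𝒳 : Set (ModuleCat.{u} R)) (h𝒳 : IsResolving R 𝒳)
    (C : ModuleCat.{u} R) (hCfg : Module.Finite R C) (hC : MemCC R 𝒳 C) :
    ∃ (X₀ X₁ : ModuleCat.{u} R) (g : ↥X₁ →ₗ[R] ↥X₀) (f : ↥X₀ →ₗ[R] ↥C),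
      X₀ ∈ 𝒳 ∧ X₁ ∈ 𝒳 ∧ X₁ ∈ XPerp R 𝒳 ∧
      Function.Exact g f ∧ Function.Surjective f ∧
      ∀ W ∈ 𝒳, Function.Surjective (fun h : ↥W →ₗ[R] ↥X₀ => f ∘ₗ h) ∧
        Function.Exact (fun h : ↥W →ₗ[R] ↥X₁ => g ∘ₗ h)
          (fun h : ↥W →ₗ[R] ↥X₀ => f ∘ₗ h) := by
  exact stmt9_general R 𝒳 h𝒳 C hC
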